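/- For every complex s with Re(s) > 1, ∑'_{(m,k)} [ 1/(m² + mk + 4k²)^s − 1/(2m² + mk + 2k²)^s ] = 2·L(χ_{-3}, s)·L(χ_5, s). -/

import Mathlib

/-- The quadratic Dirichlet character modulo 3:
`χ₋₃(n) = 1` if `n ≡ 1 (mod 3)`, `-1` if `n ≡ 2 (mod 3)`, `0` if `3 ∣ n`. -/
def chiNeg3 (n : ℕ) : ℤ :=
  if n % 3 = 1 then 1 else if n % 3 = 2 then -1 else 0

/-- The quadratic Dirichlet character modulo 5 given by the Legendre symbol `(n/5)`. -/
def chi5 (n : ℕ) : ℤ :=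
  if n % 5 = 1 ∨ n % 5 = 4 then 1 else if n % 5 = 2 ∨ n % 5 = 3 then -1 else 0

/-- The quadratic Dirichlet character modulo 15, `χ₋₁₅(n) = (n/3)·(n/5)`. -/
def chiNeg15 (n : ℕ) : ℤ := chiNeg3 n * chi5 n

/-- The Dirichlet `L`-series `L(χ, s) = ∑_{n ≥ 1} χ(n) n^{-s}`. -/
noncomputable def LSer (χ : ℕ → ℤ) (s : ℂ) : ℂ :=
  ∑' n : ℕ, (χ (n + 1) : ℂ) / ((n : ℂ) + 1) ^ s

/-- binary quadratic form -/
def qf (a b c : ℤ) (v : ℤ × ℤ) : ℤ := a * v.1 ^ 2 + b * v.1 * v.2 + c * v.2 ^ 2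

/-- equivalence of forms by a bijection of the lattice -/
def Eqv (f g : ℤ × ℤ → ℤ) : Prop := ∃ e : (ℤ × ℤ) ≃ (ℤ × ℤ), ∀ v, f v = g (e v)

/-- number of representations -/
noncomputable def cnt (f : ℤ × ℤ → ℤ) (n : ℤ) : ℕ := {v | f v = n}.ncard

lemma Eqv.trans {f g h : ℤ × ℤ → ℤ} (h1 : Eqv f g) (h2 : Eqv g h) : Eqv f h := by
  obtain ⟨e, he⟩ := h1
  obtain ⟨e', he'⟩ := h2
  exact ⟨e.trans e', fun v => by simp [he, he']⟩

lemma ncard_of_equiv (e : (ℤ × ℤ) ≃ (ℤ × ℤ)) (P Q : ℤ × ℤ → Prop) (h : ∀ v, P v ↔ Q (e v)) :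
    {v | P v}.ncard = {v | Q v}.ncard := by
  have : {v | Q v} = e '' {v | P v} := by
    ext w
    simp only [Set.mem_ofPred_eq, Set.mem_image]
    constructor
    · intro hw
      exact ⟨e.symm w, by simp [h, hw], by simp⟩
    · rintro ⟨v, hv, rfl⟩
      exact (h v).1 hv
  rw [this, Set.ncard_image_of_injective _ e.injective]

lemma Eqv.cnt_eq {f g : ℤ × ℤ → ℤ} (h1 : Eqv f g) (n : ℤ) : cnt f n = cnt g n := by
  obtain ⟨e, he⟩ := h1
  exact ncard_of_equiv e _ _ (fun v => by rw [he])

lemma eqv_translate (a b c k : ℤ) : Eqv (qf a b c) (qf a (b + 2 * a * k) (c + b * k + a * k ^ 2)) := by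
  refine ⟨⟨fun v => (v.1 - k * v.2, v.2), fun v => (v.1 + k * v.2, v.2), ?_, ?_⟩, ?_⟩
  · intro v; ext <;> simp
  · intro v; ext <;> simp
  · intro v; simp [qf]; ring

lemma eqv_swap (a b c : ℤ) : Eqv (qf a b c) (qf c b a) := by
  refine ⟨Equiv.prodComm _ _, ?_⟩
  intro v; simp [qf]; ring

lemma eqv_neg (a b c : ℤ) : Eqv (qf a b c) (qf a (-b) c) := by
  refine ⟨⟨fun v => (v.1, -v.2), fun v => (v.1, - v.2), ?_, ?_⟩, ?_⟩
  · intro v; ext <;> simp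
  · intro v; ext <;> simp
  · intro v; simp [qf]

lemma eqv_refl (f : ℤ × ℤ → ℤ) : Eqv f f := ⟨Equiv.refl _, fun _ => rfl⟩

lemma red_aux (N : ℕ) : ∀ a b c : ℤ, 0 < a → a ≤ N → b ^ 2 - 4 * a * c = -15 →
    Eqv (qf a b c) (qf 1 1 4) ∨ Eqv (qf a b c) (qf 2 1 2) := by
  induction N with
  | zero => intro a b c h1 h2; simp at h2; omega
  | succ N ih =>
    intro a b c ha haN hd
    obtain ⟨k, hk1, hk2⟩ : ∃ k : ℤ, -a ≤ b + 2 * a * k ∧ b + 2 * a * k ≤ a := by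
      refine ⟨-((b + a) / (2 * a)), ?_, ?_⟩
      · have := Int.emod_nonneg (b + a) (b := 2 * a) (by omega)
        have h2 := Int.mul_ediv_add_emod (b + a) (2 * a)
        linarith
      · have := Int.emod_lt_of_pos (b + a) (b := 2 * a) (by omega)
        have h2 := Int.mul_ediv_add_emod (b + a) (2 * a)
        linarith
    have htr := eqv_translate a b c k
    set b' := b + 2 * a * k with hb'
    set c' := c + b * k + a * k ^ 2 with hc'
    have hd' : b' ^ 2 - 4 * a * c' = -15 := by rw [hb', hc', ← hd]; ring
    have hc0 : 0 < c' := by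
      by_contra h
      push Not at h
      nlinarith [sq_nonneg b']
    suffices Eqv (qf a b' c') (qf 1 1 4) ∨ Eqv (qf a b' c') (qf 2 1 2) from
      this.imp htr.trans htr.trans
    by_cases hlt : c' < a
    · exact (ih c' b' a hc0 (by push_cast at haN; omega) (by linarith)).imp
        (eqv_swap _ _ _).trans (eqv_swap _ _ _).trans
    · push Not at hlt
      have hb2 : b' ^ 2 ≤ a ^ 2 := by nlinarith
      have ha2 : a ≤ 2 := by
        by_contra h
        push Not at h
        nlinarith
      clear_value b' c'
      have hac : a * c' ≤ 5 := by nlinarith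
      have hc5 : c' ≤ 5 := by nlinarith
      interval_cases a <;> interval_cases b' <;> (try omega)
      · obtain rfl : c' = 4 := by omega
        exact Or.inl (eqv_neg 1 (-1) 4)
      · obtain rfl : c' = 4 := by omega
        exact Or.inl (eqv_refl _)
      · obtain rfl : c' = 2 := by omega
        exact Or.inr (eqv_neg 2 (-1) 2)
      · obtain rfl : c' = 2 := by omega
        exact Or.inr (eqv_refl _)

lemma red (a b c : ℤ) (ha : 0 < a) (hd : b ^ 2 - 4 * a * c = -15) :
    Eqv (qf a b c) (qf 1 1 4) ∨ Eqv (qf a b c) (qf 2 1 2) :=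
  red_aux a.toNat a b c ha (by omega) hd

lemma val1 (v : ℤ × ℤ) : (qf 1 1 4 v % 3 = 0 ∨ qf 1 1 4 v % 3 = 1) ∧
    (qf 1 1 4 v % 5 = 0 ∨ qf 1 1 4 v % 5 = 1 ∨ qf 1 1 4 v % 5 = 4) := by
  obtain ⟨x, y⟩ := v
  simp only [qf]
  constructor
  · have hx : x % 3 = 0 ∨ x % 3 = 1 ∨ x % 3 = 2 := by omega
    have hy : y % 3 = 0 ∨ y % 3 = 1 ∨ y % 3 = 2 := by omega
    rcases hx with hx | hx | hx <;> rcases hy with hy | hy | hy <;>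
      simp [Int.add_emod, Int.mul_emod, pow_two, hx, hy]
  · have hx : x % 5 = 0 ∨ x % 5 = 1 ∨ x % 5 = 2 ∨ x % 5 = 3 ∨ x % 5 = 4 := by omega
    have hy : y % 5 = 0 ∨ y % 5 = 1 ∨ y % 5 = 2 ∨ y % 5 = 3 ∨ y % 5 = 4 := by omega
    rcases hx with hx | hx | hx | hx | hx <;> rcases hy with hy | hy | hy | hy | hy <;>
      simp [Int.add_emod, Int.mul_emod, pow_two, hx, hy]

lemma val2 (v : ℤ × ℤ) : (qf 2 1 2 v % 3 = 0 ∨ qf 2 1 2 v % 3 = 2) ∧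
    (qf 2 1 2 v % 5 = 0 ∨ qf 2 1 2 v % 5 = 2 ∨ qf 2 1 2 v % 5 = 3) := by
  obtain ⟨x, y⟩ := v
  simp only [qf]
  constructor
  · have hx : x % 3 = 0 ∨ x % 3 = 1 ∨ x % 3 = 2 := by omega
    have hy : y % 3 = 0 ∨ y % 3 = 1 ∨ y % 3 = 2 := by omega
    rcases hx with hx | hx | hx <;> rcases hy with hy | hy | hy <;>
      simp [Int.add_emod, Int.mul_emod, pow_two, hx, hy]
  · have hx : x % 5 = 0 ∨ x % 5 = 1 ∨ x % 5 = 2 ∨ x % 5 = 3 ∨ x % 5 = 4 := by omega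
    have hy : y % 5 = 0 ∨ y % 5 = 1 ∨ y % 5 = 2 ∨ y % 5 = 3 ∨ y % 5 = 4 := by omega
    rcases hx with hx | hx | hx | hx | hx <;> rcases hy with hy | hy | hy | hy | hy <;>
      simp [Int.add_emod, Int.mul_emod, pow_two, hx, hy]

lemma fin_of_bound (f : ℤ × ℤ → ℤ) (h : ∀ v, v.1 ^ 2 ≤ 2 * f v ∧ v.2 ^ 2 ≤ 2 * f v) (n : ℤ) :
    {v | f v = n}.Finite := by
  apply Set.Finite.subset (Set.finite_Icc ((-(2*n), -(2*n)) : ℤ × ℤ) (2*n, 2*n))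
  rintro ⟨x, y⟩ rfl
  have := h (x, y)
  simp only at this
  simp only [Set.mem_Icc, Prod.mk_le_mk]
  refine ⟨⟨?_, ?_⟩, ?_, ?_⟩ <;> nlinarith [Int.le_self_sq x, Int.le_self_sq y, Int.le_self_sq (-x), Int.le_self_sq (-y)]

lemma bound1 (v : ℤ × ℤ) : v.1 ^ 2 ≤ 2 * qf 1 1 4 v ∧ v.2 ^ 2 ≤ 2 * qf 1 1 4 v := by
  simp only [qf]
  constructor <;> nlinarith [sq_nonneg (v.1 + v.2), sq_nonneg v.1, sq_nonneg v.2]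

lemma bound2 (v : ℤ × ℤ) : v.1 ^ 2 ≤ 2 * qf 2 1 2 v ∧ v.2 ^ 2 ≤ 2 * qf 2 1 2 v := by
  simp only [qf]
  constructor <;> nlinarith [sq_nonneg (v.1 + v.2), sq_nonneg v.1, sq_nonneg v.2]

lemma Eqv.finite {f g : ℤ × ℤ → ℤ} (h : Eqv f g) (n : ℤ) (hg : {v | g v = n}.Finite) :
    {v | f v = n}.Finite := by
  obtain ⟨e, he⟩ := h
  have : {v | f v = n} = e ⁻¹' {v | g v = n} := by ext v; simp [he]
  rw [this]
  exact hg.preimage e.injective.injOn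

lemma fin_qf (a b c : ℤ) (ha : 0 < a) (hd : b ^ 2 - 4 * a * c = -15) (n : ℤ) :
    {v | qf a b c v = n}.Finite := by
  rcases red a b c ha hd with h | h
  · exact h.finite n (fin_of_bound _ bound1 n)
  · exact h.finite n (fin_of_bound _ bound2 n)

/-- The index `p` sublattice attached to a root `t` of the form modulo `p`. -/
lemma sub_ncard (a b c p t q n : ℤ) (hp : p ≠ 0) (ht : a * t ^ 2 + b * t + c = p * q) :
    {v | qf a b c v = p * n ∧ p ∣ v.1 - t * v.2}.ncard = cnt (qf (a * p) (2 * a * t + b) q) n := by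
  have hinj : Function.Injective (fun v : ℤ × ℤ => ((p * v.1 + t * v.2, v.2) : ℤ × ℤ)) := by
    rintro ⟨x, y⟩ ⟨x', y'⟩ h
    simp only [Prod.mk.injEq] at h
    obtain ⟨h1, rfl⟩ := h
    simpa [hp] using h1
  have key : ∀ x y : ℤ, qf a b c (p * x + t * y, y) = p * qf (a * p) (2 * a * t + b) q (x, y) := by
    intro x y
    simp only [qf]
    linear_combination y ^ 2 * ht
  rw [cnt, ← Set.ncard_image_of_injective {v | qf (a * p) (2 * a * t + b) q v = n} hinj]
  congr 1
  ext ⟨x, y⟩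
  simp only [Set.mem_ofPred_eq, Set.mem_image, Prod.mk.injEq, Prod.exists]
  constructor
  · rintro ⟨h1, u, hu⟩
    refine ⟨u, y, ?_, by linarith, rfl⟩
    have : x = p * u + t * y := by linarith
    rw [this, key] at h1
    exact mul_left_cancel₀ hp h1
  · rintro ⟨u, y', h, rfl, rfl⟩
    exact ⟨by rw [key, h], ⟨u, by ring⟩⟩

lemma mul_ncard (a b c p n : ℤ) (hp : p ≠ 0) :
    {v : ℤ × ℤ | qf a b c v = p * n ∧ p ∣ v.1 ∧ p ∣ v.2}.ncard =
      {v | p * qf a b c v = n}.ncard := by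
  have hinj : Function.Injective (fun v : ℤ × ℤ => ((p * v.1, p * v.2) : ℤ × ℤ)) := by
    rintro ⟨x, y⟩ ⟨x', y'⟩ h
    simpa [hp] using h
  have key : ∀ x y : ℤ, qf a b c (p * x, p * y) = p * (p * qf a b c (x, y)) := by
    intro x y
    simp only [qf]
    ring
  rw [← Set.ncard_image_of_injective {v | p * qf a b c v = n} hinj]
  congr 1
  ext ⟨x, y⟩
  simp only [Set.mem_ofPred_eq, Set.mem_image, Prod.mk.injEq, Prod.exists]
  constructor
  · rintro ⟨h1, ⟨u, rfl⟩, ⟨w, rfl⟩⟩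
    refine ⟨u, w, ?_, rfl, rfl⟩
    rw [key] at h1
    exact mul_left_cancel₀ hp h1
  · rintro ⟨u, w, h, rfl, rfl⟩
    exact ⟨by rw [key, h], ⟨u, rfl⟩, ⟨w, rfl⟩⟩

/-- counting with an extra factor -/
noncomputable def cntd (p : ℤ) (f : ℤ × ℤ → ℤ) (n : ℤ) : ℕ := {v | p * f v = n}.ncard

lemma hecke (a b c : ℤ) (p : ℕ) (hp : p.Prime) (ha : 0 < a) (hd : b ^ 2 - 4 * a * c = -15)
    (hpa : ¬ (p : ℤ) ∣ a) :
    ((∀ t : ℤ, ¬ (p : ℤ) ∣ a * t ^ 2 + b * t + c) ∧ ∀ n, cnt (qf a b c) (p * n) = cntd p (qf a b c) n) ∨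
    (¬ p ∣ 15 ∧ ∃ a₁ b₁ c₁ a₂ b₂ c₂ : ℤ, 0 < a₁ ∧ b₁ ^ 2 - 4 * a₁ * c₁ = -15 ∧
      0 < a₂ ∧ b₂ ^ 2 - 4 * a₂ * c₂ = -15 ∧
      (∀ v, ∃ w, (p : ℤ) * qf a₁ b₁ c₁ v = qf a b c w) ∧
      (∀ v, ∃ w, (p : ℤ) * qf a₂ b₂ c₂ v = qf a b c w) ∧
      ∀ n, cnt (qf a b c) (p * n) + cntd p (qf a b c) n =
        cnt (qf a₁ b₁ c₁) n + cnt (qf a₂ b₂ c₂) n) ∨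
    (p ∣ 15 ∧ ∃ a₁ b₁ c₁ : ℤ, 0 < a₁ ∧ b₁ ^ 2 - 4 * a₁ * c₁ = -15 ∧
      (∀ v, ∃ w, (p : ℤ) * qf a₁ b₁ c₁ v = qf a b c w) ∧
      ∀ n, cnt (qf a b c) (p * n) = cnt (qf a₁ b₁ c₁) n) := by
  have hpp : Prime (p : ℤ) := Nat.prime_iff_prime_int.1 hp
  have hp0 : (p : ℤ) ≠ 0 := hpp.ne_zero
  have hppos : (0 : ℤ) < p := by exact_mod_cast hp.pos
  have hcop : IsCoprime a (p : ℤ) := ((Prime.coprime_iff_not_dvd hpp).2 hpa).symm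
  obtain ⟨u, w, huw⟩ := hcop
  have hval : ∀ t q : ℤ, a * t ^ 2 + b * t + c = p * q →
      ∀ v, ∃ w, (p : ℤ) * qf (a * p) (2 * a * t + b) q v = qf a b c w := by
    intro t q ht v
    refine ⟨(p * v.1 + t * v.2, v.2), ?_⟩
    simp only [qf]
    linear_combination -v.2 ^ 2 * ht
  have hdisc : ∀ t q : ℤ, a * t ^ 2 + b * t + c = p * q →
      (2 * a * t + b) ^ 2 - 4 * (a * p) * q = -15 := by
    intro t q ht
    linear_combination hd + 4 * a * ht
  by_cases hroot : ∀ t : ℤ, ¬ (p : ℤ) ∣ a * t ^ 2 + b * t + c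
  · left
    refine ⟨hroot, fun n => ?_⟩
    rw [cntd, ← mul_ncard a b c p n hp0, cnt]
    congr 1
    ext ⟨x, y⟩
    simp only [Set.mem_ofPred_eq]
    refine ⟨fun h => ⟨h, ?_⟩, fun h => h.1⟩
    have hy : (p : ℤ) ∣ y := by
      by_contra hy
      obtain ⟨r, r', hr⟩ := ((Prime.coprime_iff_not_dvd hpp).2 hy).symm
      apply hroot (x * r)
      have : a * (x * r) ^ 2 + b * (x * r) + c = r ^ 2 * qf a b c (x, y) +
          p * (r' * (b * x * r + c * (1 + r * y))) := by
        simp only [qf]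
        linear_combination (-b * x * r - c * (1 + r * y)) * hr
      rw [this, h]
      exact ⟨r ^ 2 * n + r' * (b * x * r + c * (1 + r * y)), by ring⟩
    refine ⟨?_, hy⟩
    obtain ⟨z, rfl⟩ := hy
    have : (p : ℤ) ∣ a * x ^ 2 := by
      simp only [qf] at h
      exact ⟨n - b * x * z - c * p * z ^ 2, by linear_combination h⟩
    exact hpp.dvd_of_dvd_pow ((hpp.dvd_or_dvd this).resolve_left hpa)
  · right
    push Not at hroot
    obtain ⟨t, q, ht⟩ := hroot
    -- the second root
    obtain ⟨t', k, hk⟩ : ∃ t' k : ℤ, a * (t + t') + b = p * k := by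
      refine ⟨-t - u * b, w * b, ?_⟩
      linear_combination -b * huw
    have ht' : a * t' ^ 2 + b * t' + c = p * (q + k * (t' - t)) := by
      linear_combination ht + (t' - t) * hk
    have hfac : ∀ x y n : ℤ, qf a b c (x, y) = p * n →
        (p : ℤ) ∣ x - t * y ∨ (p : ℤ) ∣ x - t' * y := by
      intro x y n h
      simp only [qf] at h
      have : (p : ℤ) ∣ a * ((x - t * y) * (x - t' * y)) := by
        refine ⟨n - k * (x - t * y) * y - q * y ^ 2, ?_⟩
        linear_combination h - (x - t * y) * y * hk - y ^ 2 * ht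
      exact hpp.dvd_or_dvd ((hpp.dvd_or_dvd this).resolve_left hpa)
    have hdd : (p : ℤ) ∣ 15 ↔ (p : ℤ) ∣ t - t' := by
      have h1 : (15 : ℤ) = p * (4 * a * q - k ^ 2 * p + 2 * k * a * (t'-t)) - a ^ 2 * (t - t') ^ 2 := by
        have e1 : 2 * a * t + b = p * k + a * (t - t') := by linear_combination hk
        have e2 := hdisc t q ht
        rw [e1] at e2
        linear_combination e2
      constructor
      · intro h
        have : (p : ℤ) ∣ a ^ 2 * (t - t') ^ 2 := by
          rw [show a ^ 2 * (t - t') ^ 2 = p * (4 * a * q - k ^ 2 * p + 2 * k * a * (t'-t)) - 15 by linarith]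
          exact dvd_sub (dvd_mul_right _ _) h
        rcases hpp.dvd_or_dvd this with h | h
        · exact absurd (hpp.dvd_of_dvd_pow h) hpa
        · exact hpp.dvd_of_dvd_pow h
      · intro h
        rw [h1]
        exact dvd_sub (dvd_mul_right _ _) (Dvd.dvd.mul_left (dvd_pow h two_ne_zero) _)
    have hdd' : p ∣ 15 ↔ (p : ℤ) ∣ t - t' := by rw [← hdd]; norm_cast
    by_cases h15 : p ∣ 15
    · right
      refine ⟨h15, a * p, 2 * a * t + b, q, by positivity, hdisc t q ht, hval t q ht, fun n => ?_⟩
      rw [← sub_ncard a b c p t q n hp0 ht, cnt]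
      congr 1
      ext ⟨x, y⟩
      simp only [Set.mem_ofPred_eq]
      refine ⟨fun h => ⟨h, ?_⟩, fun h => h.1⟩
      rcases hfac x y n h with h | h
      · exact h
      · rw [show x - t * y = (x - t' * y) - (t - t') * y by ring]
        exact dvd_sub h (Dvd.dvd.mul_right (hdd'.1 h15) _)
    · left
      refine ⟨h15, a * p, 2 * a * t + b, q, a * p, 2 * a * t' + b, _, by positivity, hdisc t q ht,
        by positivity, hdisc t' _ ht', hval t q ht, hval t' _ ht', fun n => ?_⟩
      have hfin := fin_qf a b c ha hd (p * n)
      rw [← sub_ncard a b c p t q n hp0 ht, ← sub_ncard a b c p t' _ n hp0 ht', cntd,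
        ← mul_ncard a b c p n hp0, cnt, ← Set.ncard_union_add_ncard_inter
          {v | qf a b c v = p * n ∧ (p : ℤ) ∣ v.1 - t * v.2}
          {v | qf a b c v = p * n ∧ (p : ℤ) ∣ v.1 - t' * v.2}
          (hfin.subset (fun v hv => hv.1)) (hfin.subset (fun v hv => hv.1))]
      congr 2
      · ext ⟨x, y⟩
        simp only [Set.mem_ofPred_eq, Set.mem_union]
        constructor
        · intro h
          exact (hfac x y n h).imp (fun h' => ⟨h, h'⟩) (fun h' => ⟨h, h'⟩)
        · rintro (h | h) <;> exact h.1
      · ext ⟨x, y⟩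
        simp only [Set.mem_ofPred_eq, Set.mem_inter_iff]
        constructor
        · rintro ⟨h, hx, hy⟩
          exact ⟨⟨h, dvd_sub hx (Dvd.dvd.mul_left hy _)⟩, ⟨h, dvd_sub hx (Dvd.dvd.mul_left hy _)⟩⟩
        · rintro ⟨⟨h, h1⟩, ⟨_, h2⟩⟩
          have hy : (p : ℤ) ∣ y := by
            have : (p : ℤ) ∣ (t - t') * y := by
              rw [show (t - t') * y = (x - t' * y) - (x - t * y) by ring]
              exact dvd_sub h2 h1
            exact (hpp.dvd_or_dvd this).resolve_left (fun h => h15 (hdd'.2 h))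
          refine ⟨h, ?_, hy⟩
          rw [show x = (x - t * y) + t * y by ring]
          exact dvd_add h1 (Dvd.dvd.mul_left hy _)

instance fact_three : Fact (Nat.Prime 3) := ⟨Nat.prime_three⟩
instance fact_five : Fact (Nat.Prime 5) := ⟨Nat.prime_five⟩

lemma leg3 (p : ℕ) : legendreSym 3 p = chiNeg3 p := by
  rw [legendreSym.mod, chiNeg3]
  have : p % 3 = 0 ∨ p % 3 = 1 ∨ p % 3 = 2 := by omega
  have h' : ((p : ℤ) % ((3 : ℕ) : ℤ)) = ((p % 3 : ℕ) : ℤ) := by push_cast; rfl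
  rw [h']
  rcases this with h | h | h <;> rw [h] <;> decide

lemma leg5 (p : ℕ) : legendreSym 5 p = chi5 p := by
  rw [legendreSym.mod, chi5]
  have : p % 5 = 0 ∨ p % 5 = 1 ∨ p % 5 = 2 ∨ p % 5 = 3 ∨ p % 5 = 4 := by omega
  have h' : ((p : ℤ) % ((5 : ℕ) : ℤ)) = ((p % 5 : ℕ) : ℤ) := by push_cast; rfl
  rw [h']
  rcases this with h | h | h | h | h <;> rw [h] <;> decide

lemma chi_of_no_root (a b c : ℤ) (p : ℕ) (hp : p.Prime) (hd : b ^ 2 - 4 * a * c = -15)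
    (hpa : ¬ (p : ℤ) ∣ a) (hroot : ∀ t : ℤ, ¬ (p : ℤ) ∣ a * t ^ 2 + b * t + c) :
    chiNeg3 p * chi5 p = -1 := by
  have hpp : Prime (p : ℤ) := Nat.prime_iff_prime_int.1 hp
  have hp2 : p ≠ 2 := by
    rintro rfl
    have h0 := hroot 0
    have h1 := hroot 1
    push_cast at h0 h1 hpa
    ring_nf at h0 h1
    have ha : a % 2 = 1 := by omega
    have hc : c % 2 = 1 := by omega
    have hb : b % 2 = 1 := by omega
    obtain ⟨a', rfl⟩ : ∃ a', a = 2 * a' + 1 := ⟨a / 2, by omega⟩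
    obtain ⟨c', rfl⟩ : ∃ a', c = 2 * a' + 1 := ⟨c / 2, by omega⟩
    obtain ⟨b', rfl⟩ : ∃ a', b = 2 * a' + 1 := ⟨b / 2, by omega⟩
    have e : b' * (b' + 1) + 4 = (2 * a' + 1) * (2 * c' + 1) := by linarith
    have := Int.even_mul_succ_self b'
    obtain ⟨r, hr⟩ := this
    rw [hr] at e
    ring_nf at e
    omega
  have : Fact p.Prime := ⟨hp⟩
  have hns : ¬ IsSquare (((-15 : ℤ)) : ZMod p) := by
    rintro ⟨z, hz⟩
    obtain ⟨z, rfl⟩ := ZMod.intCast_surjective z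
    have hdz : (p : ℤ) ∣ z ^ 2 + 15 := by
      rw [← ZMod.intCast_zmod_eq_zero_iff_dvd]
      push_cast at hz ⊢
      linear_combination -hz
    have h2 : ¬ (p : ℤ) ∣ 2 := by
      intro h
      have : p ∣ 2 := by exact_mod_cast h
      exact hp2 ((Nat.prime_dvd_prime_iff_eq hp Nat.prime_two).1 this)
    have h2a : ¬ (p : ℤ) ∣ 2 * a := fun h => (hpp.dvd_or_dvd h).elim h2 hpa
    obtain ⟨u, w, huw⟩ := ((Prime.coprime_iff_not_dvd hpp).2 h2a).symm
    apply hroot (u * (z - b))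
    have h4 : (p : ℤ) ∣ (2 * (2 * a)) * (a * (u * (z - b)) ^ 2 + b * (u * (z - b)) + c) := by
      obtain ⟨k, hk⟩ := hdz
      have e1 : 2 * a * (u * (z - b)) + b = z - p * (w * (z - b)) := by
        linear_combination (z - b) * huw
      refine ⟨k - 2 * z * (w * (z - b)) + p * (w * (z - b)) ^ 2, ?_⟩
      have e2 : (2 * (2 * a)) * (a * (u * (z - b)) ^ 2 + b * (u * (z - b)) + c) =
        (2 * a * (u * (z - b)) + b) ^ 2 + 15 := by linear_combination -hd
      rw [e2, e1]
      linear_combination hk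
    exact (hpp.dvd_or_dvd h4).resolve_left (fun h => (hpp.dvd_or_dvd h).elim h2 h2a)
  have hl : legendreSym p (-15) = -1 := (legendreSym.eq_neg_one_iff p).2 hns
  have e1 : legendreSym p (-15) = legendreSym p (-1) * legendreSym p ((3 : ℕ) : ℤ) * legendreSym p ((5 : ℕ) : ℤ) := by
    rw [← legendreSym.mul, ← legendreSym.mul]; norm_num
  have e5 : legendreSym p ((5 : ℕ) : ℤ) = legendreSym 5 p :=
    legendreSym.quadratic_reciprocity_one_mod_four (by norm_num) hp2
  have e3 : legendreSym p ((3 : ℕ) : ℤ) = (-1) ^ (p / 2) * legendreSym 3 p := by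
    rw [legendreSym.quadratic_reciprocity' (by norm_num) hp2]; norm_num
  have em : legendreSym p (-1) = (-1) ^ (p / 2) := by
    rw [legendreSym.at_neg_one hp2, ZMod.χ₄_eq_neg_one_pow (hp.eq_two_or_odd.resolve_left hp2)]
  have s3 := leg3 p
  have s5 := leg5 p
  have hsq : ((-1 : ℤ) ^ (p / 2)) * (-1) ^ (p / 2) = 1 := by
    rw [← mul_pow]; norm_num
  rw [e1, e5, e3, em, s3, s5] at hl
  linear_combination hl - chiNeg3 p * chi5 p * hsq

lemma genus (f : ℤ × ℤ → ℤ) (a b c : ℤ) (p : ℕ) (ha : 0 < a) (hd : b ^ 2 - 4 * a * c = -15)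
    (hv : ∀ v, ∃ w, (p : ℤ) * qf a b c v = f w) (R R' : ℤ × ℤ → ℤ)
    (hR : (R = qf 1 1 4 ∧ R' = qf 2 1 2) ∨ (R = qf 2 1 2 ∧ R' = qf 1 1 4)) (hf : Eqv f R) :
    ((∀ n, cnt (qf a b c) n = cnt R n) ∧ (p % 3 = 0 ∨ p % 3 = 1) ∧ (p % 5 = 0 ∨ p % 5 = 1 ∨ p % 5 = 4)) ∨
    ((∀ n, cnt (qf a b c) n = cnt R' n) ∧ (p % 3 = 0 ∨ p % 3 = 2) ∧ (p % 5 = 0 ∨ p % 5 = 2 ∨ p % 5 = 3)) := by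
  obtain ⟨e, he⟩ := hf
  rcases red a b c ha hd with h | h
  · obtain ⟨e', he'⟩ := id h
    obtain ⟨w, hw⟩ := hv (e'.symm (1, 0))
    rw [he', he] at hw
    have h1 : qf 1 1 4 (1, 0) = 1 := by simp [qf]
    rw [Equiv.apply_symm_apply, h1] at hw
    rcases hR with ⟨rfl, rfl⟩ | ⟨rfl, rfl⟩
    · refine Or.inl ⟨h.cnt_eq, ?_⟩
      have := val1 (e w)
      omega
    · refine Or.inr ⟨h.cnt_eq, ?_⟩
      have := val2 (e w)
      omega
  · obtain ⟨e', he'⟩ := id h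
    obtain ⟨w, hw⟩ := hv (e'.symm (1, 0))
    rw [he', he] at hw
    have h1 : qf 2 1 2 (1, 0) = 2 := by simp [qf]
    rw [Equiv.apply_symm_apply, h1] at hw
    rcases hR with ⟨rfl, rfl⟩ | ⟨rfl, rfl⟩
    · refine Or.inr ⟨h.cnt_eq, ?_⟩
      have := val1 (e w)
      omega
    · refine Or.inl ⟨h.cnt_eq, ?_⟩
      have := val2 (e w)
      omega

lemma Eqv.cntd_eq {f g : ℤ × ℤ → ℤ} (h1 : Eqv f g) (p n : ℤ) : cntd p f n = cntd p g n := by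
  obtain ⟨e, he⟩ := h1
  exact ncard_of_equiv e _ _ (fun v => by rw [he])

lemma hecke_class (a b c : ℤ) (p : ℕ) (hp : p.Prime) (ha : 0 < a) (hd : b ^ 2 - 4 * a * c = -15)
    (hpa : ¬ (p : ℤ) ∣ a) (R R' : ℤ × ℤ → ℤ)
    (hR : (R = qf 1 1 4 ∧ R' = qf 2 1 2) ∨ (R = qf 2 1 2 ∧ R' = qf 1 1 4)) (hf : Eqv (qf a b c) R)
    (n : ℤ) :
    2 * ((cnt R (p * n) : ℤ) + chiNeg3 p * chi5 p * cntd p R n) =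
      (1 + chiNeg3 p * chi5 p) * (cnt R n + cnt R' n) +
        (chiNeg3 p + chi5 p) * (cnt R n - cnt R' n) := by
  rcases hecke a b c p hp ha hd hpa with ⟨h1, h2⟩ | ⟨h15, a₁, b₁, c₁, a₂, b₂, c₂, hp1, hd1, hp2, hd2, hv1, hv2, h⟩ |
    ⟨h15, a₁, b₁, c₁, hp1, hd1, hv1, h⟩
  · have hchi := chi_of_no_root a b c p hp hd hpa h1
    have h2 := h2 n
    rw [hf.cnt_eq, hf.cntd_eq] at h2
    have hsum : chiNeg3 p + chi5 p = 0 := by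
      have : chiNeg3 p = 1 ∨ chiNeg3 p = -1 ∨ chiNeg3 p = 0 := by
        unfold chiNeg3; split_ifs <;> simp
      rcases this with h | h | h <;> rw [h] at hchi ⊢ <;> linarith
    rw [hchi, hsum, h2]
    ring
  · have g1 := genus _ a₁ b₁ c₁ p hp1 hd1 hv1 R R' hR hf
    have g2 := genus _ a₂ b₂ c₂ p hp2 hd2 hv2 R R' hR hf
    have h := h n
    rw [hf.cnt_eq, hf.cntd_eq] at h
    have n3 : p % 3 ≠ 0 := fun h => by
      have : 3 ∣ p := Nat.dvd_of_mod_eq_zero h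
      rw [← (Nat.prime_dvd_prime_iff_eq Nat.prime_three hp).1 this] at h15
      norm_num at h15
    have n5 : p % 5 ≠ 0 := fun h => by
      have : 5 ∣ p := Nat.dvd_of_mod_eq_zero h
      rw [← (Nat.prime_dvd_prime_iff_eq Nat.prime_five hp).1 this] at h15
      norm_num at h15
    rcases g1 with ⟨r1, m3, m5⟩ | ⟨r1, m3, m5⟩
    · rcases g2 with ⟨r2, -, -⟩ | ⟨r2, m3', m5'⟩
      swap
      · omega
      have c3 : chiNeg3 p = 1 := by
        unfold chiNeg3; rw [if_pos]; omega
      have c5 : chi5 p = 1 := by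
        unfold chi5; rw [if_pos]; omega
      rw [r1, r2] at h
      rw [c3, c5]
      zify at h
      linear_combination 2 * h
    · rcases g2 with ⟨r2, m3', m5'⟩ | ⟨r2, -, -⟩
      · omega
      have c3 : chiNeg3 p = -1 := by
        unfold chiNeg3; rw [if_neg, if_pos] <;> omega
      have c5 : chi5 p = -1 := by
        unfold chi5; rw [if_neg, if_pos] <;> omega
      rw [r1, r2] at h
      rw [c3, c5]
      zify at h
      linear_combination 2 * h
  · have g1 := genus _ a₁ b₁ c₁ p hp1 hd1 hv1 R R' hR hf
    have h := h n
    rw [hf.cnt_eq] at h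
    have hp35 : p = 3 ∨ p = 5 := by
      have : p ∣ 3 * 5 := by simpa using h15
      rcases (Nat.Prime.dvd_mul hp).1 this with h | h
      · left; exact (Nat.prime_dvd_prime_iff_eq hp Nat.prime_three).1 h
      · right; exact (Nat.prime_dvd_prime_iff_eq hp Nat.prime_five).1 h
    have hchi : chiNeg3 p * chi5 p = 0 ∧ chiNeg3 p + chi5 p = -1 := by
      rcases hp35 with rfl | rfl <;> decide
    rcases g1 with ⟨r1, m3, m5⟩ | ⟨r1, m3, m5⟩
    · omega
    · rw [r1] at h
      rw [hchi.1, hchi.2, h]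
      ring

/-- difference of the representation numbers -/
noncomputable def D (n : ℤ) : ℤ := cnt (qf 1 1 4) n - cnt (qf 2 1 2) n

/-- the same, with an extra factor -/
noncomputable def Dd (p n : ℤ) : ℤ := cntd p (qf 1 1 4) n - cntd p (qf 2 1 2) n

lemma D_rec (p : ℕ) (hp : p.Prime) (n : ℤ) :
    D (p * n) = (chiNeg3 p + chi5 p) * D n - chiNeg3 p * chi5 p * Dd p n := by
  have h1 := hecke_class 1 1 4 p hp (by norm_num) (by norm_num)
    (by intro h; exact (Nat.prime_iff_prime_int.1 hp).not_isUnit (isUnit_of_dvd_one h)) _ _ (Or.inl ⟨rfl, rfl⟩) (eqv_refl _) n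
  have h2 : 2 * ((cnt (qf 2 1 2) (p * n) : ℤ) + chiNeg3 p * chi5 p * cntd p (qf 2 1 2) n) =
      (1 + chiNeg3 p * chi5 p) * (cnt (qf 2 1 2) n + cnt (qf 1 1 4) n) +
        (chiNeg3 p + chi5 p) * (cnt (qf 2 1 2) n - cnt (qf 1 1 4) n) := by
    by_cases hp2 : p = 2
    · refine hecke_class 3 3 2 p hp (by norm_num) (by norm_num) (by subst hp2; norm_num) _ _
        (Or.inr ⟨rfl, rfl⟩) ?_ n
      have e1 := eqv_translate 2 3 3 (-1)
      have e2 := eqv_neg 2 (-1) 2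
      norm_num at e1 e2
      exact ((eqv_swap 3 3 2).trans e1).trans e2
    · refine hecke_class 2 1 2 p hp (by norm_num) (by norm_num) ?_ _ _
        (Or.inr ⟨rfl, rfl⟩) (eqv_refl _) n
      intro h
      have : p ∣ 2 := by exact_mod_cast h
      exact hp2 ((Nat.prime_dvd_prime_iff_eq hp Nat.prime_two).1 this)
  unfold D Dd
  linarith

lemma Dd_mul (p n : ℤ) (hp : p ≠ 0) : Dd p (p * n) = D n := by
  simp only [Dd, D, cntd, cnt, mul_right_inj' hp]

lemma Dd_of_not (p n : ℤ) (h : ¬ p ∣ n) : Dd p n = 0 := by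
  have : ∀ f : ℤ × ℤ → ℤ, {v | p * f v = n} = ∅ := by
    intro f
    ext v
    simp only [Set.mem_ofPred_eq, Set.mem_empty_iff_false, iff_false]
    rintro rfl
    exact h (dvd_mul_right _ _)
  simp [Dd, cntd, this]

lemma D_one : D 1 = 2 := by
  have h2 : {v | qf 2 1 2 v = 1} = ∅ := by
    ext v
    simp only [Set.mem_ofPred_eq, Set.mem_empty_iff_false, iff_false]
    intro h
    have := val2 v
    omega
  have h1 : {v | qf 1 1 4 v = 1} = {((1 : ℤ), (0 : ℤ)), (-1, 0)} := by
    ext ⟨x, y⟩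
    simp only [Set.mem_ofPred_eq, Set.mem_insert_iff, Set.mem_singleton_iff, Prod.mk.injEq, qf]
    constructor
    · intro h
      have hy : y = 0 := by
        have : y ^ 2 < 1 := by nlinarith [sq_nonneg (2 * x + y)]
        nlinarith [sq_nonneg y, pow_eq_zero_iff (M₀ := ℤ) (a := y) two_ne_zero, (show y ^ 2 = 0 by nlinarith [sq_nonneg y])]
      subst hy
      have : (x - 1) * (x + 1) = 0 := by linarith
      rcases mul_eq_zero.1 this with h | h
      · left; omega
      · right; omega
    · rintro (⟨rfl, rfl⟩ | ⟨rfl, rfl⟩) <;> norm_num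
  rw [D, cnt, cnt, h1, h2, Set.ncard_pair (by simp)]
  simp

/-- Dirichlet convolution of the two characters -/
def cv (n : ℕ) : ℤ := ∑ x ∈ n.divisorsAntidiagonal, chiNeg3 x.1 * chi5 x.2

lemma chi3_mul (m n : ℕ) : chiNeg3 (m * n) = chiNeg3 m * chiNeg3 n := by
  unfold chiNeg3
  rw [Nat.mul_mod]
  have h1 : m % 3 = 0 ∨ m % 3 = 1 ∨ m % 3 = 2 := by omega
  have h2 : n % 3 = 0 ∨ n % 3 = 1 ∨ n % 3 = 2 := by omega
  rcases h1 with h1 | h1 | h1 <;> rcases h2 with h2 | h2 | h2 <;> rw [h1, h2] <;> decide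

lemma chi5_mul (m n : ℕ) : chi5 (m * n) = chi5 m * chi5 n := by
  unfold chi5
  rw [Nat.mul_mod]
  have h1 : m % 5 = 0 ∨ m % 5 = 1 ∨ m % 5 = 2 ∨ m % 5 = 3 ∨ m % 5 = 4 := by omega
  have h2 : n % 5 = 0 ∨ n % 5 = 1 ∨ n % 5 = 2 ∨ n % 5 = 3 ∨ n % 5 = 4 := by omega
  rcases h1 with h1 | h1 | h1 | h1 | h1 <;> rcases h2 with h2 | h2 | h2 | h2 | h2 <;>
    rw [h1, h2] <;> decide

lemma cv_filter (p n : ℕ) (hp : p.Prime) (hn : n ≠ 0) :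
    ∑ x ∈ (p * n).divisorsAntidiagonal with p ∣ x.1, chiNeg3 x.1 * chi5 x.2 = chiNeg3 p * cv n := by
  rw [cv, Finset.mul_sum]
  symm
  refine Finset.sum_bij (fun x _ => (p * x.1, x.2)) ?_ ?_ ?_ ?_
  · rintro ⟨d, e⟩ h
    simp only [Nat.mem_divisorsAntidiagonal, Finset.mem_filter] at h ⊢
    exact ⟨⟨by rw [← h.1]; ring, mul_ne_zero hp.ne_zero hn⟩, dvd_mul_right _ _⟩
  · rintro ⟨d, e⟩ _ ⟨d', e'⟩ _ h
    simpa [hp.ne_zero] using h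
  · rintro ⟨d, e⟩ h
    simp only [Nat.mem_divisorsAntidiagonal, Finset.mem_filter] at h
    obtain ⟨⟨h1, h2⟩, k, rfl⟩ := h
    refine ⟨(k, e), ?_, rfl⟩
    simp only [Nat.mem_divisorsAntidiagonal]
    exact ⟨Nat.eq_of_mul_eq_mul_left hp.pos (by rw [← h1]; ring), hn⟩
  · rintro ⟨d, e⟩ _
    simp only [chi3_mul]
    ring

lemma cv_rec (p n : ℕ) (hp : p.Prime) (hn : n ≠ 0) :
    cv (p * n) = (chiNeg3 p + chi5 p) * cv n -
      chi5 p * ∑ x ∈ n.divisorsAntidiagonal with p ∣ x.1, chiNeg3 x.1 * chi5 x.2 := by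
  have h1 := cv_filter p n hp hn
  have h2 := Finset.sum_filter_add_sum_filter_not (p * n).divisorsAntidiagonal
    (fun x => p ∣ x.1) (fun x => chiNeg3 x.1 * chi5 x.2)
  have h3 := Finset.sum_filter_add_sum_filter_not n.divisorsAntidiagonal
    (fun x => p ∣ x.1) (fun x => chiNeg3 x.1 * chi5 x.2)
  have h4 : ∑ x ∈ (p * n).divisorsAntidiagonal with ¬ p ∣ x.1, chiNeg3 x.1 * chi5 x.2 =
      chi5 p * ∑ x ∈ n.divisorsAntidiagonal with ¬ p ∣ x.1, chiNeg3 x.1 * chi5 x.2 := by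
    rw [Finset.mul_sum]
    symm
    refine Finset.sum_bij (fun x _ => (x.1, p * x.2)) ?_ ?_ ?_ ?_
    · rintro ⟨d, e⟩ h
      simp only [Nat.mem_divisorsAntidiagonal, Finset.mem_filter] at h ⊢
      exact ⟨⟨by rw [← h.1.1]; ring, mul_ne_zero hp.ne_zero hn⟩, h.2⟩
    · rintro ⟨d, e⟩ _ ⟨d', e'⟩ _ h
      simpa [hp.ne_zero] using h
    · rintro ⟨d, e⟩ h
      simp only [Nat.mem_divisorsAntidiagonal, Finset.mem_filter] at h
      obtain ⟨⟨h1, h2⟩, h3⟩ := h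
      have : p ∣ e := (hp.dvd_mul.1 (Dvd.intro _ h1.symm)).resolve_left h3
      obtain ⟨k, rfl⟩ := this
      refine ⟨(d, k), ?_, rfl⟩
      simp only [Nat.mem_divisorsAntidiagonal, Finset.mem_filter]
      exact ⟨⟨Nat.eq_of_mul_eq_mul_left hp.pos (by rw [← h1]; ring), hn⟩, h3⟩
    · rintro ⟨d, e⟩ _
      simp only [chi5_mul]
      ring
  change _ = cv (p * n) at h2
  change _ = cv n at h3
  rw [h1, h4] at h2
  linear_combination -h2 + chi5 p * h3

lemma D_eq (n : ℕ) : n ≠ 0 → D n = 2 * cv n := by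
  induction n using Nat.strong_induction_on with
  | _ n ih =>
    intro hn
    by_cases h1 : n = 1
    · subst h1
      have : cv 1 = 1 := by decide
      rw [this]
      exact_mod_cast D_one
    · obtain ⟨p, hp, m, rfl⟩ : ∃ p, p.Prime ∧ p ∣ n := Nat.exists_prime_and_dvd h1
      have hm : m ≠ 0 := by rintro rfl; simp at hn
      have hlt : m < p * m := by nlinarith [hp.two_le, Nat.pos_of_ne_zero hm]
      have ihm := ih m hlt hm
      have hp0 : (p : ℤ) ≠ 0 := by exact_mod_cast hp.ne_zero
      push_cast
      rw [D_rec p hp, cv_rec p m hp hm, ihm]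
      by_cases hpm : p ∣ m
      · obtain ⟨k, rfl⟩ := hpm
        have hk : k ≠ 0 := by rintro rfl; simp at hm
        have hlt' : k < p * k := by nlinarith [hp.two_le, Nat.pos_of_ne_zero hk]
        rw [cv_filter p k hp hk]
        push_cast
        rw [Dd_mul _ _ hp0, ih k (hlt'.trans hlt) hk]
        ring
      · rw [Dd_of_not _ _ (by exact_mod_cast hpm), Finset.sum_eq_zero]
        · ring
        · rintro ⟨d, e⟩ h
          simp only [Nat.mem_divisorsAntidiagonal, Finset.mem_filter] at h
          exact absurd (h.2.trans (Dvd.intro _ h.1.1)) hpm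

lemma lat_summable (f : ℤ × ℤ → ℤ) (h : ∀ v, v.1 ^ 2 ≤ 2 * f v ∧ v.2 ^ 2 ≤ 2 * f v)
    (s : ℂ) (hs : 1 < s.re) :
    Summable (fun v : {p : ℤ × ℤ // p ≠ 0} => 1 / ((f v.1 : ℂ) ^ s)) := by
  have hS := EisensteinSeries.summable_one_div_norm_rpow (k := 2 * s.re) (by linarith)
  have hinj : Function.Injective
      (fun v : {p : ℤ × ℤ // p ≠ 0} => (![v.1.1, v.1.2] : Fin 2 → ℤ)) := by
    rintro ⟨⟨x, y⟩, _⟩ ⟨⟨x', y'⟩, _⟩ h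
    have h0 := congrFun h 0
    have h1 := congrFun h 1
    simp at h0 h1
    simp [h0, h1]
  have hS2 := (hS.comp_injective hinj).mul_left (2 ^ s.re)
  refine Summable.of_norm_bounded hS2 ?_
  rintro ⟨⟨x, y⟩, hv⟩
  simp only [Function.comp]
  obtain ⟨b1, b2⟩ := h (x, y)
  simp only at b1 b2
  have hx : x ≠ 0 ∨ y ≠ 0 := by
    by_contra hc
    push Not at hc
    exact hv (by rw [hc.1, hc.2]; rfl)
  have hfpos : 0 < f (x, y) := by
    rcases hx with hx | hx
    · have : 0 < x ^ 2 := by positivity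
      linarith
    · have : 0 < y ^ 2 := by positivity
      linarith
  set M : ℝ := ‖(![x, y] : Fin 2 → ℤ)‖ with hM
  have hM2 : M ^ 2 ≤ 2 * (f (x, y) : ℝ) := by
    rw [hM, EisensteinSeries.norm_eq_max_natAbs]
    have b1' : ((x.natAbs : ℝ)) ^ 2 ≤ 2 * (f (x, y) : ℝ) := by
      rw [Nat.cast_natAbs, Int.cast_abs, sq_abs]; exact_mod_cast b1
    have b2' : ((y.natAbs : ℝ)) ^ 2 ≤ 2 * (f (x, y) : ℝ) := by
      rw [Nat.cast_natAbs, Int.cast_abs, sq_abs]; exact_mod_cast b2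
    rcases max_cases (x.natAbs : ℝ) (y.natAbs : ℝ) with ⟨h, -⟩ | ⟨h, -⟩
    · rw [Nat.cast_max]
      change (max (x.natAbs : ℝ) (y.natAbs : ℝ)) ^ 2 ≤ _
      rw [h]
      exact b1'
    · rw [Nat.cast_max]
      change (max (x.natAbs : ℝ) (y.natAbs : ℝ)) ^ 2 ≤ _
      rw [h]
      exact b2'
  have hM0 : 0 < M := by
    rw [hM, norm_pos_iff]
    intro h0
    have h1 := congrFun h0 0
    have h2 := congrFun h0 1
    simp at h1 h2
    omega
  have hfr : (0 : ℝ) < (f (x, y) : ℝ) := by exact_mod_cast hfpos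
  have e1 : ‖1 / ((f (x, y) : ℂ) ^ s)‖ = (f (x, y) : ℝ) ^ (-s.re) := by
    rw [norm_div, norm_one, ← Complex.ofReal_intCast, Complex.norm_cpow_eq_rpow_re_of_pos hfr,
      Real.rpow_neg hfr.le, one_div]
  rw [e1]
  calc (f (x, y) : ℝ) ^ (-s.re) ≤ (M ^ 2 / 2) ^ (-s.re) :=
        Real.rpow_le_rpow_of_nonpos (by positivity) (by linarith) (by linarith)
    _ = 2 ^ s.re * M ^ (-(2 * s.re)) := by
        rw [Real.div_rpow (by positivity) (by norm_num), Real.rpow_neg (by norm_num : (0 : ℝ) ≤ 2),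
          ← Real.rpow_natCast, ← Real.rpow_mul hM0.le, div_inv_eq_mul, mul_comm]
        congr 2
        push_cast
        ring

lemma lat_hasSum (f : ℤ × ℤ → ℤ) (h : ∀ v, v.1 ^ 2 ≤ 2 * f v ∧ v.2 ^ 2 ≤ 2 * f v) (h0 : f 0 = 0)
    (s : ℂ) (hs : 1 < s.re) :
    HasSum (LSeries.term (fun n : ℕ => (cnt f n : ℂ)) s)
      (∑' v : {p : ℤ × ℤ // p ≠ 0}, 1 / ((f v.1 : ℂ) ^ s)) := by
  have hpos : ∀ v : ℤ × ℤ, v ≠ 0 → 0 < f v := by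
    rintro ⟨x, y⟩ hv
    obtain ⟨b1, b2⟩ := h (x, y)
    simp only at b1 b2
    have hx : x ≠ 0 ∨ y ≠ 0 := by
      by_contra hc
      push Not at hc
      exact hv (by rw [hc.1, hc.2]; rfl)
    rcases hx with hx | hx
    · have : 0 < x ^ 2 := by positivity
      linarith
    · have : 0 < y ^ 2 := by positivity
      linarith
  have key := (lat_summable f h s hs).hasSum.tsum_fiberwise (fun v => (f v.1).toNat)
  refine (iff_of_eq (congrArg (fun F => HasSum F _) (funext fun n => ?_))).mpr key
  rcases Nat.eq_zero_or_pos n with rfl | hn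
  · rw [LSeries.term_zero]
    have : IsEmpty ((fun v : {p : ℤ × ℤ // p ≠ 0} => (f v.1).toNat) ⁻¹' {0}) := by
      constructor
      rintro ⟨⟨v, hv⟩, hv'⟩
      have := hpos v hv
      simp at hv'
      omega
    rw [tsum_empty]
  · rw [LSeries.term_of_ne_zero hn.ne']
    have hc : ∀ b : ((fun v : {p : ℤ × ℤ // p ≠ 0} => (f v.1).toNat) ⁻¹' {n}),
        1 / ((f b.1.1 : ℂ) ^ s) = 1 / (n : ℂ) ^ s := by
      rintro ⟨⟨v, hv⟩, hv'⟩
      have := hpos v hv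
      simp only [Set.mem_preimage, Set.mem_singleton_iff] at hv'
      have e : f v = (n : ℤ) := by omega
      simp only [e, Int.cast_natCast]
    rw [tsum_congr hc, tsum_const]
    have : Nat.card ((fun v : {p : ℤ × ℤ // p ≠ 0} => (f v.1).toNat) ⁻¹' {n}) = cnt f n := by
      rw [Nat.card_coe_set_eq, cnt, ← Set.ncard_image_of_injective _ Subtype.val_injective]
      congr 1
      ext v
      simp only [Set.mem_image, Set.mem_preimage, Set.mem_singleton_iff, Subtype.exists,
        exists_and_right, exists_eq_right, Set.mem_ofPred_eq]
      constructor
      · rintro ⟨hv, h⟩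
        have := hpos v hv
        omega
      · intro hv
        have : v ≠ 0 := by
          rintro rfl
          omega
        exact ⟨this, by omega⟩
    rw [this]
    simp [div_eq_mul_inv]

lemma LSer_eq (χ : ℕ → ℤ) (s : ℂ) (hχ : ∀ n, ‖(χ n : ℂ)‖ ≤ 1) (hs : 1 < s.re) :
    LSeriesSummable (fun n => (χ n : ℂ)) s ∧ LSer χ s = LSeries (fun n => (χ n : ℂ)) s := by
  have h : LSeriesSummable (fun n => (χ n : ℂ)) s :=
    LSeriesSummable_of_bounded_of_one_lt_re (m := 1) (fun n _ => hχ n) hs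
  refine ⟨h, ?_⟩
  rw [LSeries, Summable.tsum_eq_zero_add h, LSeries.term_zero, zero_add, LSer]
  refine tsum_congr fun n => ?_
  rw [LSeries.term_of_ne_zero (by omega)]
  push_cast
  rfl

/-- Lemma 3.3 (3): for `Re(s) > 1`,
`∑'_{(m,k)≠0} [ (m²+mk+4k²)^{-s} − (2m²+mk+2k²)^{-s} ] = 2 L(χ₋₃, s) L(χ₅, s)`. -/
theorem lattice_sum_diff_eq_two_L3_L5 (s : ℂ) (hs : 1 < s.re) :
    (∑' p : {p : ℤ × ℤ // p ≠ 0},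
        (1 / (((p.1.1 : ℂ) ^ 2 + (p.1.1 : ℂ) * (p.1.2 : ℂ) + 4 * (p.1.2 : ℂ) ^ 2) ^ s) -
          1 / ((2 * (p.1.1 : ℂ) ^ 2 + (p.1.1 : ℂ) * (p.1.2 : ℂ) + 2 * (p.1.2 : ℂ) ^ 2) ^ s))) =
      2 * LSer chiNeg3 s * LSer chi5 s := by
  have hs1 := lat_summable _ bound1 s hs
  have hs2 := lat_summable _ bound2 s hs
  have h1 := lat_hasSum _ bound1 (by simp [qf]) s hs
  have h2 := lat_hasSum _ bound2 (by simp [qf]) s hs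
  have hL : (∑' p : {p : ℤ × ℤ // p ≠ 0},
        (1 / (((p.1.1 : ℂ) ^ 2 + (p.1.1 : ℂ) * (p.1.2 : ℂ) + 4 * (p.1.2 : ℂ) ^ 2) ^ s) -
          1 / ((2 * (p.1.1 : ℂ) ^ 2 + (p.1.1 : ℂ) * (p.1.2 : ℂ) + 2 * (p.1.2 : ℂ) ^ 2) ^ s))) =
      (∑' v : {p : ℤ × ℤ // p ≠ 0}, 1 / ((qf 1 1 4 v.1 : ℂ) ^ s)) -
      (∑' v : {p : ℤ × ℤ // p ≠ 0}, 1 / ((qf 2 1 2 v.1 : ℂ) ^ s)) := by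
    rw [← hs1.tsum_sub hs2]
    refine tsum_congr fun v => ?_
    simp only [qf]
    push_cast
    simp only [one_mul]
  rw [hL, ← (h1.sub h2).tsum_eq]
  obtain ⟨a3, b3⟩ := LSer_eq chiNeg3 s (fun n => by unfold chiNeg3; split_ifs <;> simp) hs
  obtain ⟨a5, b5⟩ := LSer_eq chi5 s (fun n => by unfold chi5; split_ifs <;> simp) hs
  rw [b3, b5, mul_assoc, ← LSeries_convolution' a3 a5, LSeries, ← tsum_mul_left]
  refine tsum_congr fun n => ?_
  rcases Nat.eq_zero_or_pos n with rfl | hn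
  · simp
  · rw [LSeries.term_of_ne_zero hn.ne', LSeries.term_of_ne_zero hn.ne',
      LSeries.term_of_ne_zero hn.ne', LSeries.convolution_def, ← sub_div, ← mul_div_assoc]
    congr 1
    have := D_eq n hn.ne'
    rw [D, cv] at this
    have h' := congrArg (fun z : ℤ => (z : ℂ)) this
    push_cast at h'
    exact h'
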